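/- For every t = (t_1,…,t_N) ∈ ℝ^N one has M_{1,1}(A(t)) = (∏_{i=1}^{N−1} t_i²)·t_N. -/

import Mathlib

noncomputable section

open Matrix

/-- `N = n(n-1)/2`, the number of parameters. -/
def Npar (n : ℕ) : ℕ := n * (n - 1) / 2

/-- The decreasing run `a, a-1, …, b` (empty if `b > a`). -/
def decRun (a b : ℕ) : List ℕ := (List.range' b (a + 1 - b)).reverse

/-- The index sequence `(i_1, …, i_N)`: for `m = 1, …, ⌊n/2⌋` (here `m` is 0-based, so
`m+1` is the 1-based block index), concatenate `n`, the run `n-2, …, 2(m+1)-1`, and the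
run `n-1, …, 2(m+1)`. -/
def wordD (n : ℕ) : List ℕ :=
  ((List.range (n / 2)).map (fun m =>
    n :: (decRun (n - 2) (2 * m + 1) ++ decRun (n - 1) (2 * m + 2)))).flatten

/-- The matrix `x_i(t)` (index `i` is 1-based, matrix positions are 1-based in the paper,
0-based here). -/
def xMat (n : ℕ) (i : ℕ) (t : ℝ) : Matrix (Fin (2 * n)) (Fin (2 * n)) ℝ :=
  Matrix.of fun p q =>
    (if (p : ℕ) = (q : ℕ) then 1 else 0) +
    (if i < n then
        (if (p : ℕ) + 1 = i ∧ (q : ℕ) + 1 = i + 1 then t else 0)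
      + (if (p : ℕ) + 1 = n + i + 1 ∧ (q : ℕ) + 1 = n + i then -t else 0)
     else
        (if (p : ℕ) + 1 = n - 1 ∧ (q : ℕ) + 1 = 2 * n then t else 0)
      + (if (p : ℕ) + 1 = n ∧ (q : ℕ) + 1 = 2 * n - 1 then -t else 0))

/-- The product `x_{i_1}(t_1) ⋯ x_{i_N}(t_N)`; the parameter `t l` plays the role of
`t_{l+1}`. -/
def prodX (n : ℕ) (t : ℕ → ℝ) : Matrix (Fin (2 * n)) (Fin (2 * n)) ℝ :=
  ((List.range (Npar n)).map (fun l => xMat n ((wordD n).getD l 0) (t l))).prod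

/-- The first block `X₁(t)` of the first `n` rows of the product. -/
def X1 (n : ℕ) (t : ℕ → ℝ) : Matrix (Fin n) (Fin n) ℝ :=
  Matrix.of fun p q =>
    prodX n t ⟨(p : ℕ), by have := p.isLt; omega⟩ ⟨(q : ℕ), by have := q.isLt; omega⟩

/-- The second block `X₂(t)` of the first `n` rows of the product. -/
def X2 (n : ℕ) (t : ℕ → ℝ) : Matrix (Fin n) (Fin n) ℝ :=
  Matrix.of fun p q =>
    prodX n t ⟨(p : ℕ), by have := p.isLt; omega⟩ ⟨n + (q : ℕ), by have := q.isLt; omega⟩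

/-- The skew-symmetric matrix `A(t) = X₁(t)⁻¹ · X₂(t)`. -/
def Amat (n : ℕ) (t : ℕ → ℝ) : Matrix (Fin n) (Fin n) ℝ := (X1 n t)⁻¹ * X2 n t

/-- The set `S_n^{>0}` of totally positive skew-symmetric matrices. -/
def Spos (n : ℕ) : Set (Matrix (Fin n) (Fin n) ℝ) :=
  { A | ∃ t : ℕ → ℝ, (∀ i < Npar n, 0 < t i) ∧ A = Amat n t }

/-- The signed minor `M_{j,k}(A)`: `(-1)^{jk}` times the determinant of the submatrix of `A`
with (1-based) rows `{1,…,n-k-1} ∪ {n-k+j,…,n}` and columns `{1,…,n-j}`. -/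
def Mminor (n j k : ℕ) (A : Matrix (Fin n) (Fin n) ℝ) : ℝ :=
  (-1 : ℝ) ^ (j * k) *
    Matrix.det (Matrix.of fun (p q : Fin (n - j)) =>
      A (if (p : ℕ) < n - k - 1
          then ⟨(p : ℕ), by have := p.isLt; omega⟩
          else ⟨(p : ℕ) + j, by have := p.isLt; omega⟩)
        ⟨(q : ℕ), by have := q.isLt; omega⟩)

/-- The Pfaffian of an `m × m` matrix (intended for `m` even):
`Pf(B) = (1/(2^{m/2} (m/2)!)) Σ_σ sgn(σ) Π_i B_{σ(2i-1), σ(2i)}`. -/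
def Pfaff {m : ℕ} (B : Matrix (Fin m) (Fin m) ℝ) : ℝ :=
  (1 / ((2 : ℝ) ^ (m / 2) * (Nat.factorial (m / 2) : ℝ))) *
    ∑ σ : Equiv.Perm (Fin m), ((Equiv.Perm.sign σ : ℤ) : ℝ) *
      ∏ i : Fin (m / 2),
        B (σ ⟨2 * (i : ℕ), by have := i.isLt; omega⟩)
          (σ ⟨2 * (i : ℕ) + 1, by have := i.isLt; omega⟩)

/-- `Pf_I(A)`: the Pfaffian of the submatrix of `A` with rows and columns indexed by `I`
in increasing order. -/
def PfI {n : ℕ} (A : Matrix (Fin n) (Fin n) ℝ) (I : Finset (Fin n)) : ℝ :=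
  Pfaff (Matrix.of fun (p q : Fin I.card) =>
    A ((I.orderIsoOfFin rfl p : Fin n)) ((I.orderIsoOfFin rfl q : Fin n)))

/-- `sgn(I,[n]) = (-1)^{(Σ_{i∈I} i) - |I|(|I|+1)/2}` (the elements of `I` are 1-based, so a
0-based element `i` contributes `i+1`; the natural subtraction agrees with the integer one
since the sum of `|I|` distinct positive integers is at least `|I|(|I|+1)/2`). -/
def sgnSet {n : ℕ} (I : Finset (Fin n)) : ℝ :=
  (-1 : ℝ) ^ ((∑ i ∈ I, ((i : ℕ) + 1)) - I.card * (I.card + 1) / 2)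

/-- The block matrix `[Id_n | A]`. -/
def IdA {n : ℕ} (A : Matrix (Fin n) (Fin n) ℝ) : Matrix (Fin n) (Fin (2 * n)) ℝ :=
  Matrix.of fun p q =>
    if h : (q : ℕ) < n then (if (p : ℕ) = (q : ℕ) then 1 else 0)
    else A p ⟨(q : ℕ) - n, by have := q.isLt; omega⟩

/-- The full word `(j_1, …, j_{2N})`: `1, 2,1, 3,2,1, …, n-1,…,1` followed by `(i_1,…,i_N)`. -/
def wordFull (n : ℕ) : List ℕ :=
  (((List.range n).map (fun r => decRun r 1)).flatten) ++ wordD n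

/-- `z(ε) = x_{j_1}(ε) ⋯ x_{j_{2N}}(ε)`. -/
def zeps (n : ℕ) (ε : ℝ) : Matrix (Fin (2 * n)) (Fin (2 * n)) ℝ :=
  ((wordFull n).map (fun i => xMat n i ε)).prod

/-- `Z(ε) = z(ε)ᵀ · z(ε)`. -/
def Zeps (n : ℕ) (ε : ℝ) : Matrix (Fin (2 * n)) (Fin (2 * n)) ℝ :=
  (zeps n ε)ᵀ * zeps n ε

/-- First block `Y₁(ε)` of `[Id_n | A] · Z(ε)`. -/
def Y1 {n : ℕ} (A : Matrix (Fin n) (Fin n) ℝ) (ε : ℝ) : Matrix (Fin n) (Fin n) ℝ :=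
  Matrix.of fun p q => (IdA A * Zeps n ε) p ⟨(q : ℕ), by have := q.isLt; omega⟩

/-- Second block `Y₂(ε)` of `[Id_n | A] · Z(ε)`. -/
def Y2 {n : ℕ} (A : Matrix (Fin n) (Fin n) ℝ) (ε : ℝ) : Matrix (Fin n) (Fin n) ℝ :=
  Matrix.of fun p q => (IdA A * Zeps n ε) p ⟨n + (q : ℕ), by have := q.isLt; omega⟩

/-- The simple generators `s_i` of the Weyl group `W` of `SO(2n)`, as permutations of
`{1,…,2n}` (0-based here): for `1 ≤ i ≤ n-1`, `s_i = (i,i+1)(n+i,n+i+1)`; for `i = n`,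
`s_n = (n,2n-1)(n-1,2n)`. -/
def sGen (n : ℕ) (i : ℕ) : Equiv.Perm (Fin (2 * n)) :=
  if h : 1 ≤ i ∧ i ≤ n - 1 ∧ 2 ≤ n then
    Equiv.swap ⟨i - 1, by omega⟩ ⟨i, by omega⟩ *
      Equiv.swap ⟨n + i - 1, by omega⟩ ⟨n + i, by omega⟩
  else if h2 : i = n ∧ 2 ≤ n then
    Equiv.swap ⟨n - 1, by omega⟩ ⟨2 * n - 2, by omega⟩ *
      Equiv.swap ⟨n - 2, by omega⟩ ⟨2 * n - 1, by omega⟩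
  else 1

/-- Membership in the Weyl group `W`: `σ(n+i) ≡ n + σ(i) (mod 2n)` for all `1 ≤ i ≤ n`,
and the number of `i ∈ {1,…,n}` with `σ(i) > n` is even. (All positions are 0-based; a
0-based value `v` corresponds to the 1-based value `v+1`.) -/
def inW (n : ℕ) (σ : Equiv.Perm (Fin (2 * n))) : Prop :=
  (∀ i : Fin n,
    ((σ ⟨n + (i : ℕ), by have := i.isLt; omega⟩ : Fin (2 * n)) : ℕ)
      ≡ n + ((σ ⟨(i : ℕ), by have := i.isLt; omega⟩ : Fin (2 * n)) : ℕ) [MOD 2 * n]) ∧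
  Even (Finset.univ.filter (fun i : Fin n =>
    n ≤ ((σ ⟨(i : ℕ), by have := i.isLt; omega⟩ : Fin (2 * n)) : ℕ))).card

/-- `I_w = {i ∈ {1,…,n} : w(i) > n}`, as a finset of `Fin n` (0-based). -/
def Iset (n : ℕ) (σ : Equiv.Perm (Fin (2 * n))) : Finset (Fin n) :=
  Finset.univ.filter (fun i : Fin n =>
    n ≤ ((σ ⟨(i : ℕ), by have := i.isLt; omega⟩ : Fin (2 * n)) : ℕ))

/-- The parabolic subgroup `W_{[n-1]}` generated by `s_1, …, s_{n-1}`. -/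
def Wpar (n : ℕ) : Subgroup (Equiv.Perm (Fin (2 * n))) :=
  Subgroup.closure { σ | ∃ i, 1 ≤ i ∧ i ≤ n - 1 ∧ σ = sGen n i }

/-- The standard basis vector `e_i` of `ℝ^{2n}` (with `i : Fin n` 0-based, sitting in
position `i` of the first block). -/
def evec (n : ℕ) (i : Fin n) : Fin (2 * n) → ℝ :=
  Pi.single ⟨(i : ℕ), by have := i.isLt; omega⟩ 1

/-- The standard basis vector `f_j` of `ℝ^{2n}` (position `n + j`). -/
def fvec (n : ℕ) (j : Fin n) : Fin (2 * n) → ℝ :=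
  Pi.single ⟨n + (j : ℕ), by have := j.isLt; omega⟩ 1

/-- `f = ι(f_1)⋯ι(f_n)` in the Clifford algebra. -/
def fElt {n : ℕ} (Q : QuadraticForm ℝ (Fin (2 * n) → ℝ)) : CliffordAlgebra Q :=
  (List.ofFn (fun j : Fin n => CliffordAlgebra.ι Q (fvec n j))).prod

/-- `e_S = ι(e_{l_1})⋯ι(e_{l_s})` where `l_1 < ⋯ < l_s` enumerates `S`. -/
def eProd {n : ℕ} (Q : QuadraticForm ℝ (Fin (2 * n) → ℝ)) (S : Finset (Fin n)) :
    CliffordAlgebra Q :=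
  ((S.sort (· ≤ ·)).map (fun l => CliffordAlgebra.ι Q (evec n l))).prod

/-- `h = Π_{i=1}^n ι(e_i + Σ_j A_{ij} f_j)` (product in increasing order of `i`). -/
def hElt {n : ℕ} (Q : QuadraticForm ℝ (Fin (2 * n) → ℝ)) (A : Matrix (Fin n) (Fin n) ℝ) :
    CliffordAlgebra Q :=
  (List.ofFn (fun i : Fin n =>
    CliffordAlgebra.ι Q (evec n i + ∑ j : Fin n, A i j • fvec n j))).prod

/-- The sorted list of the (1-based) elements of `S ⊆ {1,…,n}`. -/
def valsOf {n : ℕ} (S : Finset (Fin n)) : List ℕ :=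
  (S.sort (· ≤ ·)).map (fun i => (i : ℕ) + 1)

/-- The word `w_1 w_2 ⋯ w_r` where
`w_m = s_n (s_{n-2}⋯s_{i_{2m-1}}) (s_{n-1}⋯s_{i_{2m}})` and `vals` lists `i_1 < i_2 < ⋯`
(1-based); `m` is 0-based here. -/
def uWord (n r : ℕ) (vals : List ℕ) : List ℕ :=
  ((List.range r).map (fun m =>
    n :: (decRun (n - 2) (vals.getD (2 * m) 0) ++ decRun (n - 1) (vals.getD (2 * m + 1) 0)))).flatten

/-- The permutation `u = w_1 w_2 ⋯ w_r`. -/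
def uPerm (n r : ℕ) (vals : List ℕ) : Equiv.Perm (Fin (2 * n)) :=
  ((uWord n r vals).map (sGen n)).prod

/-- `L = r + Σ_{m=1}^{r} ((n-1-i_{2m-1}) + (n-i_{2m}))`. -/
def Lval (n r : ℕ) (vals : List ℕ) : ℕ :=
  r + ∑ m ∈ Finset.range r, ((n - 1 - vals.getD (2 * m) 0) + (n - vals.getD (2 * m + 1) 0))

def stepA (n i : ℕ) (s : ℝ) (A : ℕ → ℕ → ℝ) : ℕ → ℕ → ℝ := fun p q =>
  if i < n then
    (A p q - (if p + 1 = i then s * A (p + 1) q else 0))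
      - (if q + 1 = i then s * (A p (q + 1) - (if p + 1 = i then s * A (p + 1) (q + 1) else 0)) else 0)
  else A p q + (if p + 2 = n ∧ q + 1 = n then s else 0) - (if p + 1 = n ∧ q + 2 = n then s else 0)

def runA (n : ℕ) : List ℕ → (ℕ → ℝ) → (ℕ → ℕ → ℝ) → (ℕ → ℕ → ℝ)
  | [], _, A => A
  | i :: w, t, A => runA n w (fun k => t (k + 1)) (stepA n i (t 0) A)

def stepV (n i : ℕ) (s : ℝ) (u : ℕ → ℝ) : ℕ → ℝ := fun p =>
  if i < n then u p - (if p + 1 = i then s * u (p + 1) else 0) else u p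

def runV (n : ℕ) : List ℕ → (ℕ → ℝ) → (ℕ → ℝ) → (ℕ → ℝ)
  | [], _, A => A
  | i :: w, t, A => runV n w (fun k => t (k + 1)) (stepV n i (t 0) A)

def R2 (u v : ℕ → ℝ) : ℕ → ℕ → ℝ := fun p q => u p * v q - v p * u q

def embA (B : ℕ → ℕ → ℝ) : ℕ → ℕ → ℝ := fun p q =>
  if 2 ≤ p ∧ 2 ≤ q then B (p - 2) (q - 2) else 0

def prodL (n : ℕ) : List ℕ → (ℕ → ℝ) → Matrix (Fin (2 * n)) (Fin (2 * n)) ℝ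
  | [], _ => 1
  | i :: w, t => xMat n i (t 0) * prodL n w (fun k => t (k + 1))

lemma runA_append (n : ℕ) (w1 w2 : List ℕ) (t : ℕ → ℝ) (A : ℕ → ℕ → ℝ) :
    runA n (w1 ++ w2) t A = runA n w2 (fun k => t (k + w1.length)) (runA n w1 t A) := by
  induction w1 generalizing t A with
  | nil => simp [runA]
  | cons i w ih => simp [runA, ih, add_assoc]

lemma runV_append (n : ℕ) (w1 w2 : List ℕ) (t : ℕ → ℝ) (A : ℕ → ℝ) :
    runV n (w1 ++ w2) t A = runV n w2 (fun k => t (k + w1.length)) (runV n w1 t A) := by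
  induction w1 generalizing t A with
  | nil => simp [runV]
  | cons i w ih => simp [runV, ih, add_assoc]

lemma stepA_R2 (n i : ℕ) (s : ℝ) (u v : ℕ → ℝ) (B : ℕ → ℕ → ℝ) :
    stepA n i s (R2 u v + B) = R2 (stepV n i s u) (stepV n i s v) + stepA n i s B := by
  funext p q
  simp only [stepA, R2, stepV, Pi.add_apply]
  split_ifs <;> ring

lemma runA_R2 (n : ℕ) (w : List ℕ) (t : ℕ → ℝ) (u v : ℕ → ℝ) (B : ℕ → ℕ → ℝ) :
    runA n w t (R2 u v + B) = R2 (runV n w t u) (runV n w t v) + runA n w t B := by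
  induction w generalizing t u v B with
  | nil => simp [runA, runV]
  | cons i w ih => simp [runA, runV, stepA_R2, ih]

lemma runA_zero (n : ℕ) (w : List ℕ) (hw : ∀ i ∈ w, i < n) (t : ℕ → ℝ) :
    runA n w t 0 = 0 := by
  induction w generalizing t with
  | nil => simp [runA]
  | cons i w ih =>
    have h : stepA n i (t 0) 0 = 0 := by
      funext p q
      simp [stepA, hw i (by simp)]
    simp only [runA, h]
    exact ih (fun j hj => hw j (by simp [hj])) _

lemma stepA_emb (m i : ℕ) (hm : 2 ≤ m) (hi : 1 ≤ i) (s : ℝ) (B : ℕ → ℕ → ℝ) :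
    stepA (m + 2) (i + 2) s (embA B) = embA (stepA m i s B) := by
  have key : ∀ p q, stepA (m + 2) (i + 2) s (embA B) p q = embA (stepA m i s B) p q := by
    intro p q
    rcases p with _ | _ | p <;> rcases q with _ | _ | q <;>
      simp [stepA, embA] <;> (try omega) <;> grind
  funext p q; exact key p q

lemma runA_emb (m : ℕ) (hm : 2 ≤ m) (w : List ℕ) (hw : ∀ i ∈ w, 1 ≤ i) (t : ℕ → ℝ)
    (B : ℕ → ℕ → ℝ) :
    runA (m + 2) (w.map (· + 2)) t (embA B) = embA (runA m w t B) := by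
  induction w generalizing t B with
  | nil => simp [runA]
  | cons i w ih =>
    simp only [List.map_cons, runA]
    rw [stepA_emb m i hm (hw i (by simp)), ih (fun j hj => hw j (by simp [hj]))]

lemma runV_fix (n : ℕ) (w : List ℕ) (p : ℕ) (hw : ∀ i ∈ w, i ≠ p + 1) (t : ℕ → ℝ) (u : ℕ → ℝ) :
    runV n w t u p = u p := by
  induction w generalizing t u with
  | nil => simp [runV]
  | cons i w ih =>
    simp only [runV]
    rw [ih (fun j hj => hw j (by simp [hj]))]
    have := hw i (by simp)
    simp [stepV, this.symm]

lemma runV_zero (n : ℕ) (w : List ℕ) (K : ℕ) (hw : ∀ i ∈ w, i < K) (t : ℕ → ℝ) (u : ℕ → ℝ)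
    (hu : ∀ p < K, u p = 0) (p : ℕ) (hp : p < K) :
    runV n w t u p = 0 := by
  induction w generalizing t u with
  | nil => simp [runV, hu p hp]
  | cons i w ih =>
    simp only [runV]
    apply ih (fun j hj => hw j (by simp [hj]))
    intro q hq
    have := hw i (by simp)
    simp only [stepV, hu q hq]
    split_ifs with h1 h2
    · rw [hu _ (by omega)]; simp
    · simp
    · rfl

lemma decRun_cons (b k : ℕ) : decRun (b + k) b = 
    (b + k) :: (List.range' b k).reverse := by
  unfold decRun
  rw [show b + k + 1 - b = k + 1 by omega, List.range'_concat]
  simp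

lemma mem_decRun (a b i : ℕ) : i ∈ decRun a b ↔ b ≤ i ∧ i ≤ a := by
  simp [decRun, List.mem_range'_1]; omega

lemma decRun_length (a b : ℕ) : (decRun a b).length = a + 1 - b := by simp [decRun]

lemma runV_dec (n b k : ℕ) (hb : 1 ≤ b) (hk : b + k ≤ n) (t : ℕ → ℝ) (u : ℕ → ℝ)
    (hu : ∀ p < b + k - 1, u p = 0) :
    runV n (List.range' b k).reverse t u (b - 1)
      = u (b + k - 1) * ∏ j ∈ Finset.range k, (- t j) := by
  induction k generalizing t u with
  | zero => simp [runV]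
  | succ k ih =>
    rw [List.range'_concat]
    simp only [List.reverse_append, List.reverse_cons, List.reverse_nil, List.nil_append,
      List.singleton_append, runV, one_mul]
    rw [ih (by omega)]
    · rw [Finset.prod_range_succ']
      have h1 : b + k < n := by omega
      have h2 : b + k - 1 + 1 = b + k := by omega
      simp only [stepV, h1, h2, if_true, hu (b + k - 1) (by omega)]
      rw [show b + (k + 1) - 1 = b + k by omega]
      ring
    · intro p hp
      have h1 : b + k < n := by omega
      simp only [stepV, h1, if_true, hu p (by omega)]
      rw [if_neg (by omega)]; simp

lemma wordD_succ (m : ℕ) : wordD (m + 2) =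
    (m + 2) :: (decRun m 1 ++ decRun (m + 1) 2) ++ (wordD m).map (· + 2) := by
  unfold wordD
  rw [show (m + 2) / 2 = m / 2 + 1 by omega, List.range_succ_eq_map]
  simp only [List.map_cons, List.flatten_cons, List.map_map]
  congr 1
  rw [List.map_flatten, List.map_map]
  congr 1
  apply List.map_congr_left
  intro j hj
  rw [List.mem_range] at hj
  have hm : 2 ≤ m := by omega
  have e : ∀ a b, decRun (a + 2) (b + 2) = (decRun a b).map (· + 2) := by
    intro a b
    unfold decRun
    rw [List.map_reverse, show a + 2 + 1 - (b + 2) = a + 1 - b by omega]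
    congr 1
    have := List.map_add_range' (a := 2) b (a + 1 - b) 1
    rw [add_comm b 2, ← this]
    apply List.map_congr_left
    intros; omega
  have e1 := e (m - 2) (2 * j + 1)
  have e2 := e (m - 1) (2 * j + 2)
  rw [show m - 2 + 2 = m by omega] at e1
  rw [show m - 1 + 2 = m + 1 by omega] at e2
  simp only [Function.comp, List.map_cons, List.map_append, ← e1, ← e2, Nat.succ_eq_add_one]
  rw [show m + 2 - 2 = m by omega, show m + 2 - 1 = m + 1 by omega]
  rw [show 2 * (j + 1) + 1 = 2 * j + 1 + 2 by omega, show 2 * (j + 1) + 2 = 2 * j + 2 + 2 by omega]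

lemma Npar_succ (m : ℕ) : Npar (m + 2) = 2 * m + 1 + Npar m := by
  unfold Npar
  have : (m + 2) * (m + 2 - 1) = m * (m - 1) + (2 * m + 1) * 2 := by
    rcases m with _ | m
    · rfl
    · simp; ring
  rw [this, Nat.add_mul_div_right _ _ (by norm_num)]; ring

lemma wordD_props (n : ℕ) : (wordD n).length = Npar n ∧ ∀ i ∈ wordD n, 1 ≤ i := by
  induction n using Nat.twoStepInduction with
  | zero => simp [wordD, Npar]
  | one => simp [wordD, Npar]
  | more m ih _ =>
    rw [wordD_succ, Npar_succ]
    refine ⟨?_, ?_⟩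
    · simp [decRun_length, ih.1]; omega
    · intro i hi
      simp only [List.mem_append, List.mem_cons, mem_decRun, List.mem_map] at hi
      rcases hi with (h | h | h) | ⟨j, _, h⟩ <;> omega

/-- value of A after first block plus the rest -/
lemma runA_wordD (m : ℕ) (t : ℕ → ℝ) :
    ∃ u v : ℕ → ℝ, u 0 * v 1 = ∏ j ∈ Finset.range (2 * m + 1), t j ∧ v 0 = 0 ∧
      (m = 1 → v 2 = 1 ∧ u 2 = 0 ∧ u 0 = - (t 0 * t 1)) ∧
      runA (m + 2) (wordD (m + 2)) t 0 = R2 u v +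
        runA (m + 2) ((wordD m).map (· + 2)) (fun k => t (k + (2 * m + 1))) 0 := by
  set u0 : ℕ → ℝ := fun p => if p = m then t 0 else 0 with hu0
  set v0 : ℕ → ℝ := fun p => if p = m + 1 then 1 else 0 with hv0
  have h0 : stepA (m + 2) (m + 2) (t 0) 0 = R2 u0 v0 + 0 := by
    funext p q
    simp [stepA, R2, hu0, hv0]
    grind
  set t1 : ℕ → ℝ := fun k => t (k + 1) with ht1
  set u1 := runV (m + 2) (decRun m 1) t1 u0 with hu1
  set v1 := runV (m + 2) (decRun m 1) t1 v0 with hv1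
  set t2 : ℕ → ℝ := fun k => t (k + m + 1) with ht2
  set u2 := runV (m + 2) (decRun (m + 1) 2) t2 u1 with hu2
  set v2 := runV (m + 2) (decRun (m + 1) 2) t2 v1 with hv2
  set t3 : ℕ → ℝ := fun k => t (k + (2 * m + 1)) with ht3
  set w := (wordD m).map (· + 2) with hw
  have hw3 : ∀ i ∈ w, 3 ≤ i := by
    intro i hi
    simp only [hw, List.mem_map] at hi
    obtain ⟨j, hj, rfl⟩ := hi
    have := (wordD_props m).2 j hj
    omega
  -- values
  have a1 : u1 0 = t 0 * ∏ j ∈ Finset.range m, (- t (j + 1)) := by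
    have := runV_dec (m + 2) 1 m le_rfl (by omega) t1 u0 (by
      intro p hp; simp only [hu0]; rw [if_neg (by omega)])
    simp only [hu1, decRun, Nat.add_sub_cancel]
    simp only [Nat.sub_self] at this
    rw [this]; simp [hu0, ht1]
  have a2 : u2 0 = u1 0 := by
    apply runV_fix
    intro i hi; rw [mem_decRun] at hi; omega
  have b0 : ∀ p < m + 1, v1 p = 0 := by
    apply runV_zero
    · intro i hi; rw [mem_decRun] at hi; omega
    · intro p hp; simp only [hv0]; rw [if_neg (by omega)]
  have b1 : v1 (m + 1) = 1 := by
    rw [hv1, runV_fix]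
    · simp [hv0]
    · intro i hi; rw [mem_decRun] at hi; omega
  have b2 : v2 1 = ∏ j ∈ Finset.range m, (- t (j + m + 1)) := by
    have := runV_dec (m + 2) 2 m (by omega) (by omega) t2 v1 (by
      intro p hp; exact b0 p (by omega))
    simp only [hv2, decRun]
    rw [show m + 1 + 1 - 2 = m by omega]
    simp only [show 2 - 1 = 1 by rfl] at this
    rw [this, show 2 + m - 1 = m + 1 by omega, b1]; simp [ht2]
  have b3 : v2 0 = 0 := by
    rw [hv2, runV_fix, b0 0 (by omega)]
    intro i hi; rw [mem_decRun] at hi; omega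
  have fin : ∀ x : ℕ → ℝ, ∀ p < 2, runV (m + 2) w t3 x p = x p := by
    intro x p hp
    apply runV_fix
    intro i hi; have := hw3 i hi; omega
  refine ⟨runV (m + 2) w t3 u2, runV (m + 2) w t3 v2, ?_, ?_, ?_, ?_⟩
  · rw [fin _ 0 (by omega), fin _ 1 (by omega), a2, a1, b2]
    rw [show 2 * m + 1 = (m + m) + 1 by omega, Finset.prod_range_succ', Finset.prod_range_add]
    rw [Finset.prod_neg, Finset.prod_neg]
    have : (-1 : ℝ) ^ m * (-1) ^ m = 1 := by rw [← mul_pow]; simp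
    simp only [Finset.card_range]
    have e : ∏ x ∈ Finset.range m, t (m + x + 1) = ∏ x ∈ Finset.range m, t (x + m + 1) := by
      apply Finset.prod_congr rfl; intros; congr 1; omega
    rw [e]
    linear_combination (t 0 * (∏ x ∈ Finset.range m, t (x + 1)) * (∏ x ∈ Finset.range m, t (x + m + 1))) * this
  · rw [fin _ 0 (by omega), b3]
  · rintro hm
    have hw0 : w = [] := by rw [hw, hm]; simp [wordD]
    rw [hw0]
    simp only [runV]
    refine ⟨?_, ?_, ?_⟩
    · rw [hv2, runV_fix, ← b1, hm]
      intro i hi; rw [mem_decRun] at hi; omega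
    · rw [hu2, runV_fix, hu1, runV_fix]
      · simp [hu0, hm]
      · intro i hi; rw [mem_decRun] at hi; omega
      · intro i hi; rw [mem_decRun] at hi; omega
    · rw [a2, a1, hm]; simp
  · rw [wordD_succ, runA_append]
    simp only [List.cons_append, runA]
    rw [h0, runA_R2, runA_append, runV_append, runV_append]
    rw [runA_zero (m + 2) (decRun m 1) (by intro i hi; rw [mem_decRun] at hi; omega)]
    rw [runA_zero (m + 2) (decRun (m + 1) 2) (by intro i hi; rw [mem_decRun] at hi; omega)]
    rw [← runA_R2]
    simp only [List.length_cons, List.length_append, decRun_length]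
    have e3 : (m + 1 - 1 + (m + 1 + 1 - 2) + 1) = 2 * m + 1 := by omega
    simp only [e3]
    rfl

lemma det_block (k : ℕ) (a b u v : ℕ → ℝ) (D : ℕ → ℕ → ℝ) :
    Matrix.det (Matrix.of fun (p q : Fin (2 + k)) =>
      a p * v q - b p * u q + (if 2 ≤ (p : ℕ) ∧ 2 ≤ (q : ℕ) then D (p - 2) (q - 2) else 0))
    = (a 0 * b 1 - b 0 * a 1) * (u 0 * v 1 - v 0 * u 1) *
      Matrix.det (Matrix.of fun (p q : Fin k) => D p q) := by
  rw [← Matrix.det_submatrix_equiv_self (finSumFinEquiv (m := 2) (n := k))]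
  have : (Matrix.of fun (p q : Fin (2 + k)) =>
      a p * v q - b p * u q + (if 2 ≤ (p : ℕ) ∧ 2 ≤ (q : ℕ) then D (p - 2) (q - 2) else 0)).submatrix
        (finSumFinEquiv (m := 2) (n := k)) (finSumFinEquiv (m := 2) (n := k)) =
      Matrix.fromBlocks !![a 0, b 0; a 1, b 1] 0
        (Matrix.of fun (p : Fin k) (q : Fin 2) => if q = 0 then a (2 + p) else b (2 + p))
        (Matrix.of fun (p q : Fin k) => D p q) *
      Matrix.fromBlocks !![v 0, v 1; - u 0, - u 1]
        (Matrix.of fun (q : Fin 2) (p : Fin k) => if q = 0 then v (2 + p) else - u (2 + p))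
        0 1 := by
    rw [Matrix.fromBlocks_multiply]
    ext p q
    rcases p with p | p <;> rcases q with q | q
    · fin_cases p <;> fin_cases q <;> simp [Matrix.mul_apply, Fin.sum_univ_two] <;> ring
    · fin_cases p <;> simp [Matrix.vecHead, Matrix.vecTail] <;> ring
    · fin_cases q <;> simp [Matrix.mul_apply, Fin.sum_univ_two] <;> ring
    · simp [Matrix.mul_apply, Fin.sum_univ_two, Matrix.one_apply]; ring
  rw [this, Matrix.det_mul, Matrix.det_fromBlocks_zero₁₂, Matrix.det_fromBlocks_zero₂₁,
    Matrix.det_fin_two, Matrix.det_fin_two]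
  simp
  ring

def minorN (n : ℕ) (A : ℕ → ℕ → ℝ) : ℝ :=
  - Matrix.det (Matrix.of fun (p q : Fin (n - 1)) => A (if (p : ℕ) < n - 2 then p else p + 1) q)

lemma minorN_step (m : ℕ) (hm : 2 ≤ m) (u v : ℕ → ℝ) (B : ℕ → ℕ → ℝ) :
    minorN (m + 2) (R2 u v + embA B) = (u 0 * v 1 - v 0 * u 1) ^ 2 * minorN m B := by
  obtain ⟨k, rfl⟩ : ∃ k, m = k + 1 := ⟨m - 1, by omega⟩
  have hk : 1 ≤ k := by omega
  let ρ : ℕ → ℕ := fun p => if p < k + 1 then p else p + 1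
  have h := det_block k (fun p => u (ρ p)) (fun p => v (ρ p)) u v
    (fun p q => B (if p < k - 1 then p else p + 1) q)
  unfold minorN
  have r0 : ρ 0 = 0 := by simp [ρ]
  have r1 : ρ 1 = 1 := by simp [ρ]; omega
  simp only [r0, r1] at h
  rw [← Matrix.det_submatrix_equiv_self (finCongr (show 2 + k = k + 1 + 2 - 1 by omega))]
  have e : ((Matrix.of fun (p q : Fin (k + 1 + 2 - 1)) =>
      (R2 u v + embA B) (if (p : ℕ) < k + 1 + 2 - 2 then p else p + 1) q).submatrix
      (finCongr (show 2 + k = k + 1 + 2 - 1 by omega))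
      (finCongr (show 2 + k = k + 1 + 2 - 1 by omega))) =
      Matrix.of fun (p q : Fin (2 + k)) =>
      u (ρ p) * v q - v (ρ p) * u q + (if 2 ≤ (p : ℕ) ∧ 2 ≤ (q : ℕ) then
        B (if (p : ℕ) - 2 < k - 1 then p - 2 else p - 2 + 1) (q - 2) else 0) := by
    ext p q
    simp only [Matrix.submatrix_apply, Matrix.of_apply, finCongr_apply, Fin.val_cast, R2, embA, Pi.add_apply, ρ]
    have : k + 1 + 2 - 2 = k + 1 := by omega
    rw [this]
    congr 1
    by_cases h1 : (p : ℕ) < k + 1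
    · rw [if_pos h1]
      by_cases h2 : 2 ≤ (p : ℕ)
      · rw [if_pos (show (p : ℕ) - 2 < k - 1 by omega)]
      · simp [h2]
    · rw [if_neg h1, if_neg (show ¬ ((p : ℕ) - 2 < k - 1) by omega)]
      have h3 : 2 ≤ (p : ℕ) := by omega
      have h4 : 2 ≤ (p : ℕ) + 1 := by omega
      simp only [h3, h4, true_and]
      rw [show (p : ℕ) + 1 - 2 = p - 2 + 1 by omega]
  rw [e, h]
  have : k + 1 - 2 = k - 1 := by omega
  rw [this]
  have e4 : ∀ c d : ℝ, -(c * c * d) = c ^ 2 * -d := by intros; ring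
  exact e4 _ _

lemma minorN_run (n : ℕ) (hn : 2 ≤ n) : ∀ t : ℕ → ℝ,
    minorN n (runA n (wordD n) t 0) =
      (∏ i ∈ Finset.range (Npar n - 1), t i ^ 2) * t (Npar n - 1) := by
  induction n using Nat.strong_induction_on with
  | _ n ih =>
  intro t
  obtain ⟨m, rfl⟩ : ∃ m, n = m + 2 := ⟨n - 2, by omega⟩
  obtain ⟨u, v, h1, h2, h3, h4⟩ := runA_wordD m t
  rw [h4]
  rcases Nat.lt_or_ge m 2 with hm | hm
  · have : m = 0 ∨ m = 1 := by omega
    rcases this with rfl | rfl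
    · have e : (wordD 0).map (· + 2) = [] := by simp [wordD]
      rw [e]
      simp [Finset.prod_range_succ] at h1
      simp [minorN, runA, R2, h2, Npar, h1]
      linarith
    · have e : (wordD 1).map (· + 2) = [] := by simp [wordD]
      rw [e]
      obtain ⟨g1, g2, g3⟩ := h3 rfl
      simp [Finset.prod_range_succ] at h1
      have : Npar (1 + 2) = 3 := by simp [Npar]
      rw [this]
      simp [Finset.prod_range_succ, minorN, runA, R2, h2, Matrix.det_fin_two, g1, g2]
      rw [h1, g3]; ring
  · have e : (0 : ℕ → ℕ → ℝ) = embA 0 := by funext p q; simp [embA]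
    rw [e, runA_emb m hm _ (wordD_props m).2, minorN_step m hm, ih m (by omega) hm]
    have hN : 1 ≤ Npar m := by
      obtain ⟨k, rfl⟩ : ∃ k, m = k + 2 := ⟨m - 2, by omega⟩
      rw [Npar_succ]; omega
    rw [Npar_succ, show 2 * m + 1 + Npar m - 1 = 2 * m + 1 + (Npar m - 1) by omega,
      Finset.prod_range_add, h1, h2, Finset.prod_pow, Finset.prod_pow, Finset.prod_pow]
    have : (fun i => t (i + (2 * m + 1))) = fun i => t (2 * m + 1 + i) := by
      funext i; rw [add_comm]
    simp only [add_comm _ (2 * m + 1)]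
    ring

def blkE (n : ℕ) : Fin n ⊕ Fin n ≃ Fin (2 * n) :=
  finSumFinEquiv.trans (finCongr (by omega))

lemma blkE_inl (n : ℕ) (p : Fin n) : ((blkE n (Sum.inl p) : Fin (2 * n)) : ℕ) = p := by
  simp [blkE]

lemma blkE_inr (n : ℕ) (p : Fin n) : ((blkE n (Sum.inr p) : Fin (2 * n)) : ℕ) = n + p := by
  simp [blkE, add_comm]

def gM (n i : ℕ) (s : ℝ) : Matrix (Fin n) (Fin n) ℝ := Matrix.of fun p q =>
  (if p = q then 1 else 0) + (if i < n ∧ (p : ℕ) + 1 = i ∧ (q : ℕ) = i then s else 0)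

def hM (n i : ℕ) (s : ℝ) : Matrix (Fin n) (Fin n) ℝ := Matrix.of fun p q =>
  (if p = q then 1 else 0) + (if i < n ∧ (p : ℕ) = i ∧ (q : ℕ) + 1 = i then -s else 0)

def bM (n i : ℕ) (s : ℝ) : Matrix (Fin n) (Fin n) ℝ := Matrix.of fun p q =>
  if i < n then 0 else (if (p : ℕ) + 2 = n ∧ (q : ℕ) + 1 = n then s else 0) +
    (if (p : ℕ) + 1 = n ∧ (q : ℕ) + 2 = n then - s else 0)

lemma xMat_blk (n i : ℕ) (hn : 2 ≤ n) (hi : 1 ≤ i) (s : ℝ) :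
    (xMat n i s).submatrix (blkE n) (blkE n) = Matrix.fromBlocks (gM n i s) (bM n i s) 0 (hM n i s) := by
  ext p q
  rcases p with p | p <;> rcases q with q | q <;>
    simp only [Matrix.submatrix_apply, Matrix.fromBlocks_apply₁₁, Matrix.fromBlocks_apply₁₂,
      Matrix.fromBlocks_apply₂₁, Matrix.fromBlocks_apply₂₂, xMat, gM, bM, hM, Matrix.of_apply,
      blkE_inl, blkE_inr, Fin.ext_iff, Matrix.zero_apply] <;>
    have hp := p.isLt <;> have hq := q.isLt <;> grind

lemma det_gM (n i : ℕ) (hi : 1 ≤ i) (s : ℝ) : (gM n i s).det = 1 := by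
  rw [Matrix.det_of_upperTriangular]
  · apply Finset.prod_eq_one
    intro p _
    simp only [gM, Matrix.of_apply, if_true]
    rw [if_neg (by omega)]; simp
  · intro p q hpq
    have : (q : ℕ) < p := hpq
    simp only [gM, Matrix.of_apply, Fin.ext_iff]
    rw [if_neg (by omega), if_neg (by omega)]; simp

def toM (n : ℕ) (A : ℕ → ℕ → ℝ) : Matrix (Fin n) (Fin n) ℝ := Matrix.of fun p q => A p q

lemma gM_mul (n i : ℕ) (s : ℝ) (A : ℕ → ℕ → ℝ) :
    gM n i s * toM n A = toM n (fun p q => A p q + if i < n ∧ p + 1 = i then s * A (p + 1) q else 0) := by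
  ext p q
  simp only [Matrix.mul_apply, gM, toM, Matrix.of_apply, add_mul, Finset.sum_add_distrib, ite_mul,
    one_mul, zero_mul, Finset.sum_ite_eq, Finset.mem_univ, if_true]
  congr 1
  by_cases h : i < n ∧ (p : ℕ) + 1 = i
  · rw [if_pos h, Finset.sum_eq_single (⟨i, h.1⟩ : Fin n)]
    · simp [h.1, h.2]
    · intro b _ hb
      rw [if_neg]
      rintro ⟨_, _, h3⟩
      exact hb (Fin.ext h3)
    · simp
  · rw [if_neg h]
    apply Finset.sum_eq_zero
    intro x _
    rw [if_neg (by tauto)]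

lemma mul_hM (n i : ℕ) (s : ℝ) (A : ℕ → ℕ → ℝ) :
    toM n A * hM n i s = toM n (fun p q => A p q + if i < n ∧ q + 1 = i then - s * A p (q + 1) else 0) := by
  ext p q
  simp only [Matrix.mul_apply, hM, toM, Matrix.of_apply, mul_add, Finset.sum_add_distrib, mul_ite,
    mul_one, mul_zero, Finset.sum_ite_eq', Finset.mem_univ, if_true]
  congr 1
  by_cases h : i < n ∧ (q : ℕ) + 1 = i
  · rw [if_pos h, Finset.sum_eq_single (⟨i, h.1⟩ : Fin n)]
    · simp [h.1, h.2, mul_comm]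
    · intro b _ hb
      rw [if_neg]
      rintro ⟨_, h3, _⟩
      exact hb (Fin.ext h3)
    · simp
  · rw [if_neg h]
    apply Finset.sum_eq_zero
    intro x _
    rw [if_neg (by tauto)]

lemma step_key (n i : ℕ) (s : ℝ) (A : ℕ → ℕ → ℝ) :
    gM n i s * toM n (stepA n i s A) = bM n i s + toM n A * hM n i s := by
  rw [gM_mul, mul_hM]
  ext p q
  simp only [toM, bM, stepA, Matrix.of_apply, Matrix.add_apply]
  by_cases h : i < n
  · by_cases h1 : (p : ℕ) + 1 = i <;> by_cases h2 : (q : ℕ) + 1 = i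
    · have h3 : ¬ ((p : ℕ) + 1 + 1 = i) := by omega
      simp only [h, h1, h2, h3, if_true, if_false, and_self]
      simp
      ring
    · simp [h, h1, h2]
    · simp [h, h1, h2]; ring
    · simp [h, h1, h2]
  · simp only [h, if_false, false_and]
    split_ifs <;> ring

lemma run_key (n : ℕ) (hn : 2 ≤ n) (w : List ℕ) (hw : ∀ i ∈ w, 1 ≤ i) (t : ℕ → ℝ)
    (A : ℕ → ℕ → ℝ) (M : Matrix (Fin (2 * n)) (Fin (2 * n)) ℝ) (G C D : Matrix (Fin n) (Fin n) ℝ)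
    (hG : G.det = 1)
    (hM' : M.submatrix (blkE n) (blkE n) = Matrix.fromBlocks G (G * toM n A) C D) :
    ∃ G' C' D' : Matrix (Fin n) (Fin n) ℝ, G'.det = 1 ∧
      (M * prodL n w t).submatrix (blkE n) (blkE n) =
        Matrix.fromBlocks G' (G' * toM n (runA n w t A)) C' D' := by
  induction w generalizing t A M G C D with
  | nil => exact ⟨G, C, D, hG, by simpa [prodL, runA] using hM'⟩
  | cons i w ih =>
    simp only [prodL, runA, ← mul_assoc]
    have hi := hw i (by simp)
    apply ih (fun j hj => hw j (by simp [hj])) _ _ _ (G * gM n i (t 0)) (C * gM n i (t 0))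
      (C * bM n i (t 0) + D * hM n i (t 0))
    · rw [Matrix.det_mul, hG, det_gM n i hi, one_mul]
    · rw [← Matrix.submatrix_mul_equiv _ _ _ (blkE n), hM', xMat_blk n i hn hi,
        Matrix.fromBlocks_multiply, mul_assoc G (gM n i (t 0)), step_key, mul_add]
      simp [Matrix.mul_assoc]

lemma prodL_eq (n : ℕ) (w : List ℕ) (t : ℕ → ℝ) :
    ((List.range w.length).map (fun l => xMat n (w.getD l 0) (t l))).prod = prodL n w t := by
  induction w generalizing t with
  | nil => simp [prodL]
  | cons i w ih =>
    rw [List.length_cons, List.range_succ_eq_map, List.map_cons, List.prod_cons, List.map_map,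
      prodL, ← ih]
    rfl

lemma Amat_eq (n : ℕ) (hn : 2 ≤ n) (t : ℕ → ℝ) : Amat n t = toM n (runA n (wordD n) t 0) := by
  obtain ⟨hl, hw⟩ := wordD_props n
  obtain ⟨G, C, D, hG, h⟩ := run_key n hn (wordD n) hw t 0 1 1 0 1 (by simp) (by
    have : toM n 0 = 0 := by ext; simp [toM]
    rw [this]
    simp)
  rw [one_mul, ← prodL_eq, hl] at h
  have h1 : X1 n t = G := by
    ext p q
    have := congrFun (congrFun h (Sum.inl p)) (Sum.inl q)
    simp only [Matrix.fromBlocks_apply₁₁, Matrix.submatrix_apply] at this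
    rw [← this]
    rfl
  have h2 : X2 n t = G * toM n (runA n (wordD n) t 0) := by
    ext p q
    have := congrFun (congrFun h (Sum.inl p)) (Sum.inr q)
    simp only [Matrix.fromBlocks_apply₁₂, Matrix.submatrix_apply] at this
    rw [← this]
    rfl
  rw [Amat, h1, h2, ← mul_assoc, Matrix.nonsing_inv_mul _ (by rw [hG]; exact isUnit_one), one_mul]

/-- `M_{1,1}(A(t)) = (Π_{i=1}^{N-1} t_i²) · t_N`. -/
theorem Mminor_one_one (n : ℕ) (hn : 2 ≤ n) (t : ℕ → ℝ) :
    Mminor n 1 1 (Amat n t) =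
      (∏ i ∈ Finset.range (Npar n - 1), t i ^ 2) * t (Npar n - 1) := by
  rw [← minorN_run n hn t, Amat_eq n hn]
  unfold Mminor minorN
  simp only [mul_one, pow_one, neg_one_mul]
  congr 2
  ext p q
  simp only [Matrix.of_apply, toM]
  rw [show n - 1 - 1 = n - 2 by omega]
  split_ifs <;> rfl
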